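/- Let m ≥ 3 be an integer, let G be a graph in which every pair of vertices has a common neighbor, and let H be a C_m-saturated spanning subgraph of G. Then H is connected and has diameter at most 2m−2. -/

import Mathlib

open Filter Real

/-- `H` contains a (not necessarily induced) copy of `F`. -/
def ContainsCopy {α β : Type*} (F : SimpleGraph α) (H : SimpleGraph β) : Prop :=
  ∃ f : α → β, Function.Injective f ∧ ∀ ⦃a b⦄, F.Adj a b → H.Adj (f a) (f b)

/-- `H` is `F`-saturated in `G`: `H` is a spanning subgraph of `G` that is `F`-free,
and adding any edge of `G` missing from `H` creates a copy of `F`. -/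
def IsSaturatedIn {V : Type*} {α : Type*} (G H : SimpleGraph V) (F : SimpleGraph α) : Prop :=
  H ≤ G ∧ ¬ ContainsCopy F H ∧
    ∀ v w : V, G.Adj v w → ¬ H.Adj v w →
      ContainsCopy F (H ⊔ SimpleGraph.fromEdgeSet {s(v, w)})

/-- The cycle `C_m`, as a graph on `ZMod m`. -/
def cycGraph (m : ℕ) : SimpleGraph (ZMod m) :=
  SimpleGraph.fromRel (fun a b => a = b + 1)

lemma edge_walk {V : Type*} (m : ℕ) (hm : 3 ≤ m) (G H : SimpleGraph V)
    (hsat : IsSaturatedIn G H (cycGraph m)) (v w : V) (h : G.Adj v w) :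
    ∃ p : H.Walk v w, p.length ≤ m - 1 := by
  obtain ⟨_, hfree, hadd⟩ := hsat
  by_cases hH : H.Adj v w
  · exact ⟨hH.toWalk, by simp; omega⟩
  obtain ⟨f, hf, hadj⟩ := hadd v w h hH
  have hne : ∀ k : ℕ, 0 < k → k < m → (k : ZMod m) ≠ 0 := by
    intro k h0 h1 h2
    rw [ZMod.natCast_eq_zero_iff] at h2
    exact absurd (Nat.le_of_dvd h0 h2) (by omega)
  have hone : (1 : ZMod m) ≠ 0 := by simpa using hne 1 (by omega) (by omega)
  have hcyc : ∀ a : ZMod m, (cycGraph m).Adj a (a + 1) := by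
    intro a
    simp [cycGraph, SimpleGraph.fromRel_adj, hone]
  have hex : ∃ a : ZMod m, ¬ H.Adj (f a) (f (a + 1)) := by
    by_contra hc
    push Not at hc
    refine hfree ⟨f, hf, ?_⟩
    intro a b hab
    rw [cycGraph, SimpleGraph.fromRel_adj] at hab
    rcases hab.2 with h1 | h1
    · rw [h1]; exact (hc b).symm
    · rw [h1]; exact hc a
  obtain ⟨a, ha⟩ := hex
  have hst : ∀ b : ZMod m, ¬ H.Adj (f b) (f (b + 1)) → s(f b, f (b + 1)) = s(v, w) := by
    intro b hb
    have := hadj (hcyc b)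
    rw [SimpleGraph.sup_adj, SimpleGraph.fromEdgeSet_adj] at this
    rcases this with h1 | h1
    · exact absurd h1 hb
    · exact h1.1
  have hwalk : ∀ k : ℕ, k < m → ∃ p : H.Walk (f (a + 1)) (f (a + 1 + k)), p.length = k := by
    intro k
    induction k with
    | zero =>
      intro _
      have e : a + 1 + ((0 : ℕ) : ZMod m) = a + 1 := by simp
      rw [e]; exact ⟨.nil, rfl⟩
    | succ k ih =>
      intro hk
      obtain ⟨p, hp⟩ := ih (by omega)
      have hA : H.Adj (f (a + 1 + k)) (f (a + 1 + k + 1)) := by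
        by_contra hb
        have h1 := (hst _ hb).trans (hst _ ha).symm
        rw [Sym2.eq_iff] at h1
        rcases h1 with ⟨h1, _⟩ | ⟨h1, h2⟩
        · have := hf h1
          refine hne (k + 1) (by omega) hk ?_
          push_cast
          linear_combination this
        · have e1 := hf h1
          have e2 := hf h2
          refine hne 2 (by omega) (by omega) ?_
          push_cast
          linear_combination e2 - e1
      have e : a + 1 + ((k + 1 : ℕ) : ZMod m) = a + 1 + k + 1 := by push_cast; ring
      rw [e]
      exact ⟨p.concat hA, by simp [hp]⟩
  have hl := hwalk (m - 1) (by omega)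
  have e : a + 1 + ((m - 1 : ℕ) : ZMod m) = a := by
    rw [Nat.cast_sub (by omega)]; simp
  rw [e] at hl
  obtain ⟨p, hp⟩ := hl
  have h1 := hst a ha
  rw [Sym2.eq_iff] at h1
  rcases h1 with ⟨rfl, rfl⟩ | ⟨rfl, rfl⟩
  · exact ⟨p.reverse, by simp [hp]⟩
  · exact ⟨p, by simp [hp]⟩

/-- If every pair of vertices of `G` has a common neighbor and `H`
is a `C_m`-saturated spanning subgraph of `G` (`m ≥ 3`), then `H` is connected with
diameter at most `2m − 2`. -/
theorem saturated_small_diameter {V : Type*} [Fintype V] [Nonempty V]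
    (m : ℕ) (hm : 3 ≤ m) (G H : SimpleGraph V)
    (hcn : ∀ u v : V, ∃ w : V, G.Adj u w ∧ G.Adj v w)
    (hsat : IsSaturatedIn G H (cycGraph m)) :
    H.Connected ∧ ∀ u v : V, H.dist u v ≤ 2 * m - 2 := by
  have key : ∀ u v : V, ∃ p : H.Walk u v, p.length ≤ 2 * m - 2 := by
    intro u v
    obtain ⟨w, h1, h2⟩ := hcn u v
    obtain ⟨p, hp⟩ := edge_walk m hm G H hsat u w h1
    obtain ⟨q, hq⟩ := edge_walk m hm G H hsat v w h2
    exact ⟨p.append q.reverse, by simp; omega⟩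
  refine ⟨⟨fun u v => ?_⟩, fun u v => ?_⟩
  · obtain ⟨p, _⟩ := key u v
    exact ⟨p⟩
  · obtain ⟨p, hp⟩ := key u v
    exact (SimpleGraph.dist_le p).trans hp
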